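/- For every positive integer n, Σ_{μ ⊢ n} f_μ · q^{n(μ)}·[n]_q!/∏_{(i,j)∈μ}[h_{ij}]_q = [n]_q!, where f_μ = n!/∏ h_{ij} is the number of standard Young tableaux of shape μ. -/

import Mathlib

noncomputable section

/-- The rational function `q`. -/
def qq : RatFunc ℚ := RatFunc.X

/-- `[k]_q = 1 + q + ⋯ + q^{k−1}` in `ℚ(q)`. -/
def qInt (k : ℕ) : RatFunc ℚ := ∑ i ∈ Finset.range k, qq ^ i

/-- `[n]_q! = [1]_q [2]_q ⋯ [n]_q`. -/
def qFact (n : ℕ) : RatFunc ℚ := ∏ k ∈ Finset.range n, qInt (k + 1)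

/-- The hook length of the cell `c = (i,j)` of the Young diagram `μ`. -/
def hookLength (μ : YoungDiagram) (c : ℕ × ℕ) : ℕ :=
  μ.rowLen c.1 + μ.colLen c.2 - (c.1 + c.2 + 1)

/-- `n(μ) = Σ_i (i−1)·μ_i`, the sum over all cells of the (0-indexed) row index. -/
def nStat (μ : YoungDiagram) : ℕ := ∑ c ∈ μ.cells, c.1

/-- The number `f_μ = n!/∏_{(i,j)∈μ} h_{ij}(μ)` of standard Young tableaux of shape `μ`
(hook length formula), as an element of `ℚ(q)`. -/
def fSYT (n : ℕ) (μ : YoungDiagram) : RatFunc ℚ :=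
  (n.factorial : RatFunc ℚ) / ∏ c ∈ μ.cells, (hookLength μ c : RatFunc ℚ)

/-!
Write `JT h ℓ` for the Jacobi–Trudi determinant `det (h (ℓ i - j))` at the beta numbers `ℓ` of a
partition. If `m * f m = f (m - 1)`, that is `f m = 1 / m!`, then lowering the beta numbers one at a
time and summing multiplies it by the size of the partition, `∑ i, JT f (ℓ - e i) = n * JT f ℓ`,
whereas for any `h` with `h 0 = 1` raising them gives Pieri's rule
`∑ i, JT h (ℓ + e i) = h 1 * JT h ℓ`. Lowering and raising are adjoint under the pairing over
partitions, so `n! * ∑ ℓ, JT f ℓ * JT h ℓ = (h 1) ^ n` by induction on `n`.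

Take `h m = 1 / [m]_q!`. The entries of the Jacobi–Trudi matrix are then monic polynomials of degree
`j` in `[ℓ i]_q` up to row and column factors, so the determinant is a Vandermonde product of the
differences `[ℓ j]_q - [ℓ i]_q`. The naturals below the beta number of a row are the smaller beta
numbers and the gaps numbering the columns of that row; the differences to the former cancel the
Vandermonde product, and those to the latter are the hook lengths. Hence
`JT h ℓ = q ^ n(μ) / ∏ [hook]_q`, and `q = 1` gives `JT f ℓ = 1 / ∏ hook = f_μ / n!`.
-/

section Determinants

open Matrix

variable {n R : Type*} [Fintype n] [DecidableEq n] [CommRing R]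

lemma sum_det_updateCol (M N : Matrix n n R) :
    ∑ j, (M.updateCol j (Nᵀ j)).det = (M.adjugate * N).trace := by
  simp only [← cramer_apply, cramer_eq_adjugate_mulVec, trace, diag_apply, mul_apply, mulVec,
    dotProduct, transpose_apply]

lemma sum_det_updateRow (M N : Matrix n n R) :
    ∑ i, (M.updateRow i (N i)).det = (M.adjugate * N).trace := by
  simpa only [updateCol_transpose, det_transpose, transpose_transpose, ← adjugate_transpose,
    ← transpose_mul, trace_transpose, trace_mul_comm N] using sum_det_updateCol Mᵀ Nᵀ

lemma trace_adjugate_mul_diagonal_mul_sub (M : Matrix n n R) (d e : n → R) :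
    (M.adjugate * (diagonal d * M - M * diagonal e)).trace = (∑ i, d i - ∑ i, e i) * M.det := by
  rw [Matrix.mul_sub, trace_sub, trace_mul_comm, Matrix.mul_assoc, mul_adjugate, ← Matrix.mul_assoc,
    adjugate_mul]
  simp [sub_mul, mul_comm]

end Determinants

section JacobiTrudi

open Matrix

variable {k : ℕ} {R : Type*}

/-- The Jacobi–Trudi matrix of the sequence `h` (extended by zero to negative indices), with the
rows indexed by beta numbers `ℓ i` rather than parts. For the increasing beta numbers of a
partition `μ` it is the usual matrix `h (μ_i - i + j)` with rows and columns both reversed. -/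
def jacobiTrudi (h : ℤ → R) (ℓ : Fin k → ℤ) : Matrix (Fin k) (Fin k) R :=
  .of fun i j ↦ h (ℓ i - j)

lemma jacobiTrudi_add_single (h : ℤ → R) (ℓ : Fin k → ℤ) (i : Fin k) (c : ℤ) :
    jacobiTrudi h (ℓ + Pi.single i c) =
      (jacobiTrudi h ℓ).updateRow i (jacobiTrudi h (fun i ↦ ℓ i + c) i) := by
  ext a b
  obtain rfl | ha := eq_or_ne a i <;> simp [jacobiTrudi, *]

variable [CommRing R] {f h : ℤ → R} {ℓ : Fin k → ℤ}

lemma sum_det_jacobiTrudi_add_single (h : ℤ → R) (ℓ : Fin k → ℤ) (c : ℤ) :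
    ∑ i, (jacobiTrudi h (ℓ + Pi.single i c)).det =
      ((jacobiTrudi h ℓ).adjugate * jacobiTrudi h fun i ↦ ℓ i + c).trace := by
  simp only [jacobiTrudi_add_single, sum_det_updateRow]

lemma sum_det_jacobiTrudi_sub_single_one (hrec : ∀ m : ℤ, m * f m = f (m - 1)) (ℓ : Fin k → ℤ) :
    ∑ i, (jacobiTrudi f (ℓ - Pi.single i 1)).det =
      ((∑ i, ℓ i - ∑ j : Fin k, (j : ℤ) : ℤ) : R) * (jacobiTrudi f ℓ).det := by
  have shift : (jacobiTrudi f fun i ↦ ℓ i + -1) =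
      diagonal (fun i ↦ (ℓ i : R)) * jacobiTrudi f ℓ -
        jacobiTrudi f ℓ * diagonal fun j : Fin k ↦ (((j : ℕ) : ℤ) : R) := by
    ext i j
    rw [Matrix.sub_apply, diagonal_mul, mul_diagonal, mul_comm _ (((j : ℕ) : ℤ) : R), ← sub_mul,
      ← Int.cast_sub]
    simp only [jacobiTrudi, of_apply, hrec]
    congr 1
    ring
  simp only [sub_eq_add_neg ℓ, ← Pi.single_neg, sum_det_jacobiTrudi_add_single, shift,
    trace_adjugate_mul_diagonal_mul_sub]
  push_cast
  rfl

lemma sum_det_jacobiTrudi_add_single_one (hneg : ∀ m < 0, h m = 0) (hzero : h 0 = 1)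
    {ℓ : Fin (k + 1) → ℤ} {r : Fin (k + 1)} (hr : ℓ r = 0) :
    ∑ i, (jacobiTrudi h (ℓ + Pi.single i 1)).det = h 1 * (jacobiTrudi h ℓ).det := by
  set M := jacobiTrudi h ℓ
  set N := jacobiTrudi h fun i ↦ ℓ i + 1
  have later_col (j : Fin k) : (M.updateCol j.succ (Nᵀ j.succ)).det = 0 := by
    rw [show Nᵀ j.succ = fun i ↦ M i j.castSucc by ext i; simp [M, N, jacobiTrudi]]
    exact det_updateCol_eq_zero j.castSucc_lt_succ.ne
  -- Since `ℓ r = 0`, row `r` of `M` is `(1, 0, …, 0)`.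
  have row_eq_zero : (M.updateCol 0 (Nᵀ 0 - h 1 • M.col 0)).det = 0 := by
    refine det_eq_zero_of_row_eq_zero r fun j ↦ ?_
    obtain rfl | ⟨j, rfl⟩ := j.eq_zero_or_eq_succ
    · simp [M, N, jacobiTrudi, hr, hzero]
    · rw [updateCol_ne j.succ_ne_zero]
      exact hneg _ (by simp [hr]; omega)
  have first_col : (M.updateCol 0 (Nᵀ 0)).det = h 1 * M.det := by
    rw [← sub_add_cancel (Nᵀ 0) (h 1 • M.col 0), det_updateCol_add, row_eq_zero,
      det_updateCol_smul, zero_add]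
    congr 2
    ext i j
    obtain rfl | hj := eq_or_ne j 0 <;> simp [*]
  rw [sum_det_jacobiTrudi_add_single, ← sum_det_updateCol, Fin.sum_univ_succ,
    Fintype.sum_eq_zero _ later_col, add_zero, first_col]

lemma det_jacobiTrudi_id (hneg : ∀ m < 0, h m = 0) (hzero : h 0 = 1) :
    (jacobiTrudi h fun i : Fin k ↦ (i : ℤ)).det = 1 := by
  rw [det_of_isLowerTriangular]
  · simp [jacobiTrudi, hzero]
  · intro i j hij
    have : (i : ℕ) < j := hij
    exact hneg _ (by dsimp only; omega)

lemma injective_of_det_jacobiTrudi_ne_zero (hℓ : (jacobiTrudi h ℓ).det ≠ 0) :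
    Function.Injective ℓ := by
  intro i j hij
  by_contra hne
  exact hℓ (det_zero_of_row_eq hne (by ext; simp [jacobiTrudi, hij]))

lemma nonneg_of_det_jacobiTrudi_ne_zero (hneg : ∀ m < 0, h m = 0)
    (hℓ : (jacobiTrudi h ℓ).det ≠ 0) : 0 ≤ ℓ := by
  intro i
  by_contra! hi
  have : ℓ i < 0 := hi
  exact hℓ (det_eq_zero_of_row_eq_zero i fun j ↦ hneg _ (by omega))

end JacobiTrudi

section BetaSeqs

variable {k n : ℕ} {ℓ : Fin k → ℤ}

lemma monotone_sub_index (hℓ : StrictMono ℓ) : Monotone fun i : Fin k ↦ ℓ i - (i : ℤ) := by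
  cases k with
  | zero => exact fun i ↦ i.elim0
  | succ k =>
    refine Fin.monotone_iff_le_succ.2 fun i ↦ ?_
    have := hℓ i.castSucc_lt_succ
    simp only [Fin.val_castSucc, Fin.val_succ]
    omega

lemma add_le_of_strictMono (hℓ : StrictMono ℓ) {c : ℤ} (hc : ∀ i, c ≤ ℓ i) (i : Fin k) :
    c + i ≤ ℓ i := by
  have hk : 0 < k := i.pos
  have : ℓ ⟨0, hk⟩ - (0 : ℕ) ≤ ℓ i - (i : ℕ) := monotone_sub_index hℓ (Nat.zero_le i)
  have := hc ⟨0, hk⟩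
  omega

lemma monotone_add_single_one (hℓ : StrictMono ℓ) (i : Fin k) :
    Monotone (ℓ + Pi.single i 1) := by
  intro a b hab
  obtain rfl | hab := hab.eq_or_lt
  · rfl
  have := hℓ hab
  simp only [Pi.add_apply, Pi.single_apply]
  split_ifs <;> omega

lemma monotone_sub_single_one (hℓ : StrictMono ℓ) (i : Fin k) :
    Monotone (ℓ - Pi.single i 1) := by
  intro a b hab
  obtain rfl | hab := hab.eq_or_lt
  · rfl
  have := hℓ hab
  simp only [Pi.sub_apply, Pi.single_apply]
  split_ifs <;> omega

open Classical in
/-- The increasing sequences of `k` beta numbers of the partitions of `n` into at most `k` parts: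
the parts are the differences `ℓ i - i`. -/
def betaSeqs (k n : ℕ) : Finset (Fin k → ℤ) :=
  {ℓ ∈ Finset.Icc 0 fun _ ↦ n + ∑ j : Fin k, (j : ℤ) |
    StrictMono ℓ ∧ ∑ i, ℓ i = n + ∑ j : Fin k, (j : ℤ)}

lemma mem_betaSeqs :
    ℓ ∈ betaSeqs k n ↔ 0 ≤ ℓ ∧ StrictMono ℓ ∧ ∑ i, ℓ i = n + ∑ j : Fin k, (j : ℤ) := by
  simp only [betaSeqs, Finset.mem_filter, Finset.mem_Icc, and_assoc, and_congr_right_iff,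
    and_iff_right_iff_imp]
  rintro hℓ ⟨-, hsum⟩ i
  exact hsum ▸ Finset.single_le_sum (fun j _ ↦ hℓ j) (Finset.mem_univ i)

lemma betaSeqs_zero (k : ℕ) : betaSeqs k 0 = {fun i : Fin k ↦ (i : ℤ)} := by
  ext ℓ
  rw [mem_betaSeqs, Finset.mem_singleton, Nat.cast_zero, zero_add]
  constructor
  · rintro ⟨hnonneg, hmono, hsum⟩
    have hle (i : Fin k) : (i : ℤ) ≤ ℓ i := by simpa using add_le_of_strictMono hmono hnonneg i
    ext i
    exact ((Finset.sum_eq_sum_iff_of_le fun i _ ↦ hle i).1 hsum.symm i (Finset.mem_univ i)).symm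
  · rintro rfl
    exact ⟨fun i ↦ by simp, fun i j hij ↦ by simpa using hij, rfl⟩

lemma exists_eq_zero_of_mem_betaSeqs (hℓ : ℓ ∈ betaSeqs k n) (hn : n < k) : ∃ i, ℓ i = 0 := by
  obtain ⟨hnonneg, hmono, hsum⟩ := mem_betaSeqs.1 hℓ
  by_contra! hne
  have hle (i : Fin k) : 1 + (i : ℤ) ≤ ℓ i :=
    add_le_of_strictMono hmono (fun j ↦ (hnonneg j).lt_of_ne (hne j).symm) i
  have := Finset.sum_le_sum fun i (_ : i ∈ Finset.univ) ↦ hle i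
  simp only [Finset.sum_add_distrib, Finset.sum_const, Finset.card_univ, Fintype.card_fin,
    nsmul_eq_mul, mul_one, hsum] at this
  omega

variable {R : Type*} [CommRing R] {f h : ℤ → R}

lemma mem_betaSeqs_of_det_jacobiTrudi_ne_zero (hneg : ∀ m < 0, h m = 0) (hℓ : Monotone ℓ)
    (hdet : (jacobiTrudi h ℓ).det ≠ 0) (hsum : ∑ i, ℓ i = n + ∑ j : Fin k, (j : ℤ)) :
    ℓ ∈ betaSeqs k n :=
  mem_betaSeqs.2 ⟨nonneg_of_det_jacobiTrudi_ne_zero hneg hdet,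
    hℓ.strictMono_of_injective (injective_of_det_jacobiTrudi_ne_zero hdet), hsum⟩

lemma sum_betaSeqs_succ_mul_eq (hf_neg : ∀ m < 0, f m = 0) (hh_neg : ∀ m < 0, h m = 0) (i : Fin k) :
    ∑ ℓ ∈ betaSeqs k (n + 1), (jacobiTrudi f (ℓ - Pi.single i 1)).det * (jacobiTrudi h ℓ).det =
      ∑ ℓ ∈ betaSeqs k n, (jacobiTrudi f ℓ).det * (jacobiTrudi h (ℓ + Pi.single i 1)).det := by
  refine Finset.sum_bij_ne_zero (fun ℓ _ _ ↦ ℓ - Pi.single i 1) ?_ ?_ ?_ ?_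
  · intro ℓ hℓ hne
    obtain ⟨-, hmono, hsum⟩ := mem_betaSeqs.1 hℓ
    refine mem_betaSeqs_of_det_jacobiTrudi_ne_zero hf_neg (monotone_sub_single_one hmono i)
      (left_ne_zero_of_mul hne) ?_
    simp only [Pi.sub_apply, Finset.sum_sub_distrib, hsum, Finset.sum_pi_single', Finset.mem_univ,
      if_true]
    push_cast
    ring
  · intro ℓ _ _ ℓ' _ _ heq
    exact sub_left_injective heq
  · intro ℓ hℓ hne
    obtain ⟨-, hmono, hsum⟩ := mem_betaSeqs.1 hℓ
    refine ⟨ℓ + Pi.single i 1, mem_betaSeqs_of_det_jacobiTrudi_ne_zero hh_neg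
      (monotone_add_single_one hmono i) (right_ne_zero_of_mul hne) ?_, ?_, add_sub_cancel_right _ _⟩
    · simp only [Pi.add_apply, Finset.sum_add_distrib, hsum, Finset.sum_pi_single',
        Finset.mem_univ, if_true]
      push_cast
      ring
    · rwa [add_sub_cancel_right]
  · intro ℓ _ _
    rw [sub_add_cancel]

lemma succ_mul_sum_betaSeqs_succ (hf_neg : ∀ m < 0, f m = 0) (hf_rec : ∀ m : ℤ, m * f m = f (m - 1))
    (hh_neg : ∀ m < 0, h m = 0) (hh_zero : h 0 = 1) (hn : n < k) :
    ((n + 1 : ℕ) : R) * ∑ ℓ ∈ betaSeqs k (n + 1), (jacobiTrudi f ℓ).det * (jacobiTrudi h ℓ).det =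
      h 1 * ∑ ℓ ∈ betaSeqs k n, (jacobiTrudi f ℓ).det * (jacobiTrudi h ℓ).det := by
  obtain ⟨k, rfl⟩ := Nat.exists_eq_add_one_of_ne_zero (Nat.ne_zero_of_lt hn)
  calc
    _ = ∑ ℓ ∈ betaSeqs (k + 1) (n + 1), ∑ i,
          (jacobiTrudi f (ℓ - Pi.single i 1)).det * (jacobiTrudi h ℓ).det := by
      rw [Finset.mul_sum]
      refine Finset.sum_congr rfl fun ℓ hℓ ↦ ?_
      rw [← Finset.sum_mul, sum_det_jacobiTrudi_sub_single_one hf_rec, (mem_betaSeqs.1 hℓ).2.2,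
        add_sub_cancel_right, Int.cast_natCast, mul_assoc]
    _ = ∑ ℓ ∈ betaSeqs (k + 1) n, ∑ i,
          (jacobiTrudi f ℓ).det * (jacobiTrudi h (ℓ + Pi.single i 1)).det := by
      rw [Finset.sum_comm, Finset.sum_comm (s := betaSeqs _ n)]
      exact Finset.sum_congr rfl fun i _ ↦ sum_betaSeqs_succ_mul_eq hf_neg hh_neg i
    _ = _ := by
      rw [Finset.mul_sum]
      refine Finset.sum_congr rfl fun ℓ hℓ ↦ ?_
      obtain ⟨r, hr⟩ := exists_eq_zero_of_mem_betaSeqs hℓ hn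
      rw [← Finset.mul_sum, sum_det_jacobiTrudi_add_single_one hh_neg hh_zero hr, mul_left_comm]

-- In terms of Schur functions this reads `∑ f_λ s_λ = h₁ⁿ`.
lemma factorial_mul_sum_betaSeqs (hf_neg : ∀ m < 0, f m = 0) (hf_rec : ∀ m : ℤ, m * f m = f (m - 1))
    (hf_zero : f 0 = 1) (hh_neg : ∀ m < 0, h m = 0) (hh_zero : h 0 = 1) (hn : n ≤ k) :
    (n.factorial : R) * ∑ ℓ ∈ betaSeqs k n, (jacobiTrudi f ℓ).det * (jacobiTrudi h ℓ).det =
      h 1 ^ n := by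
  induction n with
  | zero =>
    rw [betaSeqs_zero, Finset.sum_singleton, det_jacobiTrudi_id hf_neg hf_zero,
      det_jacobiTrudi_id hh_neg hh_zero, Nat.factorial_zero, Nat.cast_one, one_mul, one_mul,
      pow_zero]
  | succ n ih =>
    rw [Nat.factorial_succ, mul_comm (n + 1), Nat.cast_mul, mul_assoc,
      succ_mul_sum_betaSeqs_succ hf_neg hf_rec hh_neg hh_zero hn, mul_left_comm, ih (by omega),
      pow_succ']

end BetaSeqs

section QNumbers

open Finset Matrix Polynomial

/-- The `q`-number `[n]_q = 1 + q + ⋯ + q^(n-1)` for an element `q` of any semiring, so that `q = 1`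
is allowed. -/
def qNumber {R : Type*} [Semiring R] (q : R) (n : ℕ) : R := ∑ i ∈ range n, q ^ i

/-- The `q`-factorial `[n]_q! = [1]_q ⋯ [n]_q`. -/
def qFactorial {R : Type*} [CommSemiring R] (q : R) (n : ℕ) : R := ∏ k ∈ range n, qNumber q (k + 1)

lemma qNumber_one {R : Type*} [Semiring R] (n : ℕ) : qNumber (1 : R) n = n := by simp [qNumber]

lemma qNumber_add {R : Type*} [Semiring R] (q : R) (a b : ℕ) :
    qNumber q (a + b) = qNumber q a + q ^ a * qNumber q b := by
  simp only [qNumber, sum_range_add, pow_add, mul_sum]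

lemma qNumber_sub_qNumber {R : Type*} [Ring R] (q : R) {a b : ℕ} (hab : a ≤ b) :
    qNumber q b - qNumber q a = q ^ a * qNumber q (b - a) := by
  rw [sub_eq_iff_eq_add', ← qNumber_add, Nat.add_sub_cancel' hab]

lemma qNumber_ratFuncX_ne_zero (K : Type*) [Field K] {m : ℕ} (hm : m ≠ 0) :
    qNumber (RatFunc.X : RatFunc K) m ≠ 0 := by
  rw [qNumber, ← RatFunc.algebraMap_X]
  simp only [← map_pow, ← map_sum]
  exact RatFunc.algebraMap_ne_zero (monic_geom_sum_X hm).ne_zero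

variable {K : Type*} [Field K] {q : K}

/-- The sequence `m ↦ 1 / [m]_q!`, extended by zero to negative `m`: these are the complete
homogeneous symmetric functions at `x_i = (1 - q) q^i`. -/
def invQFactorial (q : K) (m : ℤ) : K := if m < 0 then 0 else (qFactorial q m.toNat)⁻¹

lemma invQFactorial_of_neg (q : K) : ∀ m < 0, invQFactorial q m = 0 := fun _ hm ↦ if_pos hm

lemma invQFactorial_natCast (q : K) (n : ℕ) : invQFactorial q n = (qFactorial q n)⁻¹ := by
  simp [invQFactorial]

lemma invQFactorial_zero (q : K) : invQFactorial q 0 = 1 := by simp [invQFactorial, qFactorial]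

lemma invQFactorial_one (q : K) : invQFactorial q 1 = 1 := by
  simp [invQFactorial, qFactorial, qNumber]

lemma qFactorial_ne_zero (hq : ∀ m ≠ 0, qNumber q m ≠ 0) (n : ℕ) : qFactorial q n ≠ 0 :=
  prod_ne_zero_iff.2 fun k _ ↦ hq (k + 1) k.succ_ne_zero

lemma qNumber_mul_invQFactorial (hq : ∀ m ≠ 0, qNumber q m ≠ 0) (n : ℕ) :
    qNumber q n * invQFactorial q n = invQFactorial q (n - 1) := by
  cases n with
  | zero => simp [qNumber, invQFactorial]
  | succ n =>
    rw [Nat.cast_succ, add_sub_cancel_right, ← Nat.cast_succ, invQFactorial_natCast,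
      invQFactorial_natCast, qFactorial, prod_range_succ, mul_inv, mul_left_comm,
      mul_inv_cancel₀ (hq _ n.succ_ne_zero), mul_one, qFactorial]

lemma intCast_mul_invQFactorial_one [CharZero K] (m : ℤ) :
    m * invQFactorial (1 : K) m = invQFactorial 1 (m - 1) := by
  obtain hm | hm := lt_or_ge m 0
  · rw [invQFactorial_of_neg _ _ hm, invQFactorial_of_neg _ _ (by omega), mul_zero]
  · lift m to ℕ using hm
    rw [Int.cast_natCast, ← qNumber_one]
    exact qNumber_mul_invQFactorial (fun m hm ↦ by simpa [qNumber_one] using hm) m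

lemma pow_mul_invQFactorial_sub_succ (hq : ∀ m ≠ 0, qNumber q m ≠ 0) (b j : ℕ) :
    q ^ j * invQFactorial q (b - (j + 1 : ℕ)) =
      (qNumber q b - qNumber q j) * invQFactorial q (b - j) := by
  obtain hbj | hjb := lt_or_ge b j
  · rw [invQFactorial_of_neg _ _ (by omega), invQFactorial_of_neg _ _ (by omega), mul_zero,
      mul_zero]
  · rw [qNumber_sub_qNumber q hjb, mul_assoc, ← Nat.cast_sub hjb, qNumber_mul_invQFactorial hq,
      Nat.cast_sub hjb, Nat.cast_succ, sub_sub]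

lemma prod_pow_mul_qFactorial_mul_invQFactorial (hq : ∀ m ≠ 0, qNumber q m ≠ 0) (b j : ℕ) :
    (∏ t ∈ range j, q ^ t) * (qFactorial q b * invQFactorial q (b - j)) =
      ∏ t ∈ range j, (qNumber q b - qNumber q t) := by
  induction j with
  | zero => simp [invQFactorial_natCast, qFactorial_ne_zero hq]
  | succ j ih =>
    rw [prod_range_succ, prod_range_succ, ← ih]
    linear_combination
      (∏ t ∈ range j, q ^ t) * qFactorial q b * pow_mul_invQFactorial_sub_succ hq b j

lemma prod_pow_mul_prod_qFactorial_mul_det_jacobiTrudi (hq : ∀ m ≠ 0, qNumber q m ≠ 0) {k : ℕ}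
    (b : Fin k → ℕ) :
    (∏ j : Fin k, ∏ t ∈ range j, q ^ t) * ((∏ i, qFactorial q (b i)) *
        (jacobiTrudi (invQFactorial q) fun i ↦ (b i : ℤ)).det) =
      ∏ i, ∏ j ∈ Ioi i, (qNumber q (b j) - qNumber q (b i)) := by
  let p (j : Fin k) : K[X] := ∏ t ∈ range j, (X - C (qNumber q t))
  have hp_deg (j : Fin k) : (p j).natDegree = j := by simp [p]
  have hp_monic (j : Fin k) : (p j).Monic := monic_prod_X_sub_C _ _
  rw [← det_mul_column, ← det_mul_row, ← det_vandermonde fun i ↦ qNumber q (b i),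
    det_eval_matrixOfPolynomials_eq_det_vandermonde _ p hp_deg hp_monic]
  congr 1
  ext i j
  simp only [p, of_apply, jacobiTrudi, eval_prod, eval_sub, eval_X, eval_C,
    ← prod_pow_mul_qFactorial_mul_invQFactorial hq]

end QNumbers

section BetaNumbers

open Finset

/-- The `i`-th smallest of the `k` beta numbers `μ_r + k - r` (`r = 1, …, k`) of a Young diagram
`μ`, the first-column hook lengths when `μ` has exactly `k` rows. -/
def betaNumber (k : ℕ) (μ : YoungDiagram) (i : Fin k) : ℕ := μ.rowLen i.rev + i

/-- The natural number associated with column `c` in the complement of the set of `k` beta numbers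
of `μ`. The subtraction is not truncated as long as `μ` has at most `k` rows. -/
def columnGap (k : ℕ) (μ : YoungDiagram) (c : ℕ) : ℕ := k + c - μ.colLen c

variable {k n : ℕ} {μ : YoungDiagram}

lemma strictMono_betaNumber (k : ℕ) (μ : YoungDiagram) : StrictMono (betaNumber k μ) :=
  fun _ _ hij ↦ add_lt_add_of_le_of_lt (μ.rowLen_anti _ _ (Fin.rev_le_rev.2 hij.le)) hij

lemma strictMono_columnGap (hk : μ.colLen 0 ≤ k) : StrictMono (columnGap k μ) := by
  intro c d hcd
  have := μ.colLen_anti 0 c c.zero_le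
  have := μ.colLen_anti c d hcd.le
  simp only [columnGap]
  omega

lemma betaNumber_sub_columnGap (hk : μ.colLen 0 ≤ k) (i : Fin k) (c : ℕ) :
    betaNumber k μ i - columnGap k μ c = hookLength μ (i.rev, c) := by
  have := μ.colLen_anti 0 c c.zero_le
  have := i.val_rev
  simp only [betaNumber, columnGap, hookLength]
  omega

lemma lt_rowLen_iff_lt_colLen (μ : YoungDiagram) (r c : ℕ) :
    c < μ.rowLen r ↔ r < μ.colLen c := by
  rw [← YoungDiagram.mem_iff_lt_rowLen, YoungDiagram.mem_iff_lt_colLen]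

lemma columnGap_lt_betaNumber_iff (hk : μ.colLen 0 ≤ k) (i : Fin k) (c : ℕ) :
    columnGap k μ c < betaNumber k μ i ↔ c < μ.rowLen i.rev := by
  have := μ.colLen_anti 0 c c.zero_le
  have := i.val_rev
  have := lt_rowLen_iff_lt_colLen μ i.rev c
  simp only [betaNumber, columnGap]
  omega

lemma columnGap_ne_betaNumber (hk : μ.colLen 0 ≤ k) (i : Fin k) (c : ℕ) :
    columnGap k μ c ≠ betaNumber k μ i := by
  have := μ.colLen_anti 0 c c.zero_le
  have := i.val_rev
  have := lt_rowLen_iff_lt_colLen μ i.rev c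
  simp only [betaNumber, columnGap]
  omega

lemma disjoint_image_betaNumber_image_columnGap (hk : μ.colLen 0 ≤ k) (s : Finset (Fin k))
    (t : Finset ℕ) : Disjoint (s.image (betaNumber k μ)) (t.image (columnGap k μ)) := by
  simp only [disjoint_left, mem_image]
  rintro _ ⟨i, -, rfl⟩ ⟨c, -, hc⟩
  exact columnGap_ne_betaNumber hk i c hc

lemma image_betaNumber_union_image_columnGap (hk : μ.colLen 0 ≤ k) (i : Fin k) :
    (Iio i).image (betaNumber k μ) ∪ (range (μ.rowLen i.rev)).image (columnGap k μ) =
      range (betaNumber k μ i) := by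
  refine eq_of_subset_of_card_le (union_subset ?_ ?_) ?_
  · simpa [image_subset_iff] using fun j hj ↦ strictMono_betaNumber k μ hj
  · simp [image_subset_iff, columnGap_lt_betaNumber_iff hk]
  · rw [card_union_of_disjoint (disjoint_image_betaNumber_image_columnGap hk _ _),
      card_image_of_injective _ (strictMono_betaNumber k μ).injective,
      card_image_of_injective _ (strictMono_columnGap hk).injective, Fin.card_Iio, card_range,
      card_range, betaNumber, add_comm]

variable {M : Type*} [CommMonoid M]

lemma prod_hookLength_row_mul_prod_betaNumber_sub (hk : μ.colLen 0 ≤ k) (φ : ℕ → M) (i : Fin k) :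
    (∏ c ∈ range (μ.rowLen i.rev), φ (hookLength μ (i.rev, c))) *
        ∏ j ∈ Iio i, φ (betaNumber k μ i - betaNumber k μ j) =
      ∏ t ∈ range (betaNumber k μ i), φ (t + 1) := by
  set b := betaNumber k μ
  calc
    _ = (∏ j ∈ Iio i, φ (b i - b j)) *
        ∏ c ∈ range (μ.rowLen i.rev), φ (b i - columnGap k μ c) := by
      simp only [b, betaNumber_sub_columnGap hk, mul_comm]
    _ = ∏ t ∈ range (b i), φ (b i - t) := by
      rw [← image_betaNumber_union_image_columnGap hk,
        prod_union (disjoint_image_betaNumber_image_columnGap hk _ _),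
        prod_image (strictMono_betaNumber k μ).injective.injOn,
        prod_image (strictMono_columnGap hk).injective.injOn]
    _ = ∏ t ∈ range (b i), φ (t + 1) := by
      rw [← prod_range_reflect]
      refine prod_congr rfl fun t ht ↦ ?_
      have := mem_range.1 ht
      congr 1
      omega

@[to_additive]
lemma prod_cells_eq_prod_rows (hk : μ.colLen 0 ≤ k) (g : ℕ × ℕ → M) :
    ∏ c ∈ μ.cells, g c = ∏ i : Fin k, ∏ j ∈ range (μ.rowLen i.rev), g (i.rev, j) := by
  have mem_cells_iff (c : ℕ × ℕ) : c ∈ μ.cells ↔ c.1 ∈ range k ∧ c.2 ∈ range (μ.rowLen c.1) := by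
    rw [μ.mem_cells, mem_range, mem_range, ← YoungDiagram.mem_iff_lt_rowLen, iff_and_self,
      YoungDiagram.mem_iff_lt_colLen]
    exact fun hc ↦ (hc.trans_le (μ.colLen_anti 0 c.2 c.2.zero_le)).trans_le hk
  rw [prod_finset_product _ (range k) (fun r ↦ range (μ.rowLen r)) mem_cells_iff,
    ← Fin.prod_univ_eq_prod_range fun r ↦ ∏ j ∈ range (μ.rowLen r), g (r, j)]
  exact (Equiv.prod_comp Fin.revPerm _).symm

lemma prod_hookLength_mul_prod_betaNumber_sub (hk : μ.colLen 0 ≤ k) (φ : ℕ → M) :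
    (∏ c ∈ μ.cells, φ (hookLength μ c)) *
        ∏ i, ∏ j ∈ Iio i, φ (betaNumber k μ i - betaNumber k μ j) =
      ∏ i, ∏ t ∈ range (betaNumber k μ i), φ (t + 1) := by
  simp only [prod_cells_eq_prod_rows hk, ← prod_mul_distrib,
    prod_hookLength_row_mul_prod_betaNumber_sub hk]

lemma nStat_eq_sum (hk : μ.colLen 0 ≤ k) : nStat μ = ∑ i : Fin k, ∑ _j ∈ Ioi i, μ.rowLen i.rev := by
  simp only [nStat, sum_cells_eq_sum_rows hk, sum_const, card_range, Fin.card_Ioi, smul_eq_mul,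
    mul_comm, Fin.val_rev, Nat.sub_sub, add_comm]

lemma card_add_sum_eq_sum_betaNumber (hk : μ.colLen 0 ≤ k) :
    μ.card + ∑ i : Fin k, (i : ℕ) = ∑ i, betaNumber k μ i := by
  rw [YoungDiagram.card, card_eq_sum_ones, sum_cells_eq_sum_rows hk]
  simp only [sum_const, card_range, smul_eq_mul, mul_one, betaNumber, sum_add_distrib]

end BetaNumbers

section Bijection

open Finset

variable {k n : ℕ}

lemma colLen_le_card (μ : YoungDiagram) (j : ℕ) : μ.colLen j ≤ μ.card :=
  μ.colLen_eq_card.trans_le (card_le_card (filter_subset _ _))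

lemma rowLen_eq_zero_of_colLen_le {μ : YoungDiagram} {r : ℕ} (h : μ.colLen 0 ≤ r) :
    μ.rowLen r = 0 := by
  simpa using (lt_rowLen_iff_lt_colLen μ r 0).not.2 h.not_gt

lemma eq_of_betaNumber_eq {μ ν : YoungDiagram} (hμ : μ.colLen 0 ≤ k) (hν : ν.colLen 0 ≤ k)
    (h : betaNumber k μ = betaNumber k ν) : μ = ν := by
  have rowLen_eq (r : ℕ) : μ.rowLen r = ν.rowLen r := by
    obtain hr | hr := lt_or_ge r k
    · simpa [betaNumber] using congr_fun h (Fin.rev ⟨r, hr⟩)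
    · rw [rowLen_eq_zero_of_colLen_le (hμ.trans hr), rowLen_eq_zero_of_colLen_le (hν.trans hr)]
  ext ⟨r, c⟩
  simp only [YoungDiagram.mem_cells, YoungDiagram.mem_iff_lt_rowLen, rowLen_eq]

lemma exists_betaNumber_eq {b : Fin k → ℕ} (hb : StrictMono b) :
    ∃ μ : YoungDiagram, μ.colLen 0 ≤ k ∧ betaNumber k μ = b := by
  have hb_cast : StrictMono fun i ↦ (b i : ℤ) := Nat.strictMono_cast.comp hb
  have hle (i : Fin k) : (i : ℕ) ≤ b i := by
    have := add_le_of_strictMono hb_cast (fun i ↦ (b i).cast_nonneg) i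
    omega
  have parts_antitone : Antitone fun i : Fin k ↦ b i.rev - (i.rev : ℕ) := by
    intro i j hij
    have : (b j.rev : ℤ) - (j.rev : ℕ) ≤ b i.rev - (i.rev : ℕ) :=
      monotone_sub_index hb_cast (Fin.rev_le_rev.2 hij)
    dsimp only
    omega
  let w := List.ofFn fun i : Fin k ↦ b i.rev - (i.rev : ℕ)
  have hw : w.SortedGE := parts_antitone.sortedGE_ofFn
  refine ⟨.ofRowLens w hw, ?_, funext fun i ↦ ?_⟩
  · by_contra! h
    obtain ⟨hlt, -⟩ := YoungDiagram.mem_ofRowLens.1 (YoungDiagram.mem_iff_lt_colLen.2 h)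
    simp [w] at hlt
  · have rowLen_eq : (YoungDiagram.ofRowLens w hw).rowLen i.rev = b i - i := by
      rw [YoungDiagram.rowLen_ofRowLens ⟨i.rev, by rw [List.length_ofFn]; exact i.rev.isLt⟩]
      simp only [w, Fin.getElem_fin, List.getElem_ofFn, Fin.eta, Fin.rev_rev]
    rw [betaNumber, rowLen_eq, Nat.sub_add_cancel (hle i)]

lemma bijOn_betaNumber (hn : n ≤ k) :
    Set.BijOn (fun μ i ↦ (betaNumber k μ i : ℤ)) {μ | μ.card = n} (betaSeqs k n) := by
  have colLen_le {μ : YoungDiagram} (hμ : μ.card = n) : μ.colLen 0 ≤ k :=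
    (colLen_le_card μ 0).trans (hμ.trans_le hn)
  refine ⟨fun μ hμ ↦ ?_, fun μ hμ ν hν h ↦ ?_, fun ℓ hℓ ↦ ?_⟩
  · refine mem_betaSeqs.2 ⟨fun i ↦ (betaNumber k μ i).cast_nonneg,
      Nat.strictMono_cast.comp (strictMono_betaNumber k μ), ?_⟩
    have := card_add_sum_eq_sum_betaNumber (colLen_le hμ)
    rw [hμ] at this
    dsimp only
    exact_mod_cast this.symm
  · refine eq_of_betaNumber_eq (colLen_le hμ) (colLen_le hν) (funext fun i ↦ ?_)
    exact Nat.cast_injective (congr_fun h i)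
  · obtain ⟨hnonneg, hmono, hsum⟩ := mem_betaSeqs.1 hℓ
    lift ℓ to Fin k → ℕ using hnonneg
    obtain ⟨μ, hμ, rfl⟩ := exists_betaNumber_eq (b := ℓ) fun i j hij ↦ Nat.cast_lt.1 (hmono hij)
    refine ⟨μ, ?_, rfl⟩
    have := card_add_sum_eq_sum_betaNumber hμ
    zify at this
    exact Nat.cast_injective (add_right_cancel (this.trans hsum))

end Bijection

section PrincipalSpecialization

open Finset

variable {k : ℕ} {μ : YoungDiagram} {K : Type*} [Field K] {q : K}

lemma prod_qNumber_betaNumber_sub_qNumber (hk : μ.colLen 0 ≤ k) (q : K) :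
    ∏ i, ∏ j ∈ Ioi i, (qNumber q (betaNumber k μ j) - qNumber q (betaNumber k μ i)) =
      (∏ j : Fin k, ∏ t ∈ range j, q ^ t) * (q ^ nStat μ *
        ∏ i, ∏ j ∈ Iio i, qNumber q (betaNumber k μ i - betaNumber k μ j)) := by
  have prod_Ioi_eq_prod_Iio (g : Fin k → Fin k → K) :
      ∏ i, ∏ j ∈ Ioi i, g i j = ∏ j, ∏ i ∈ Iio j, g i j := prod_comm' (by simp)
  have prod_pow_index : ∏ i : Fin k, ∏ _j ∈ Ioi i, q ^ (i : ℕ) =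
      ∏ j : Fin k, ∏ t ∈ range j, q ^ t := by
    rw [prod_Ioi_eq_prod_Iio]
    refine prod_congr rfl fun j _ ↦ ?_
    rw [← Nat.Iio_eq_range, ← Fin.map_valEmbedding_Iio, prod_map]
    rfl
  have prod_pow_row : ∏ i : Fin k, ∏ _j ∈ Ioi i, q ^ μ.rowLen i.rev = q ^ nStat μ := by
    simp only [nStat_eq_sum hk, prod_pow_eq_pow_sum]
  calc
    _ = ∏ i : Fin k, ∏ j ∈ Ioi i, q ^ (i : ℕ) * (q ^ μ.rowLen i.rev *
          qNumber q (betaNumber k μ j - betaNumber k μ i)) := by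
      refine prod_congr rfl fun i _ ↦ prod_congr rfl fun j hj ↦ ?_
      rw [qNumber_sub_qNumber q (strictMono_betaNumber k μ (mem_Ioi.1 hj)).le, ← mul_assoc,
        ← pow_add, add_comm (i : ℕ), ← betaNumber]
    _ = _ := by
      simp only [prod_mul_distrib, prod_pow_index, prod_pow_row]
      rw [prod_Ioi_eq_prod_Iio fun i j ↦ qNumber q (betaNumber k μ j - betaNumber k μ i)]

lemma det_jacobiTrudi_betaNumber (hq0 : q ≠ 0) (hq : ∀ m ≠ 0, qNumber q m ≠ 0)
    (hk : μ.colLen 0 ≤ k) :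
    (jacobiTrudi (invQFactorial q) fun i ↦ (betaNumber k μ i : ℤ)).det =
      q ^ nStat μ / ∏ c ∈ μ.cells, qNumber q (hookLength μ c) := by
  have hooks_mul_diffs : (∏ c ∈ μ.cells, qNumber q (hookLength μ c)) *
      ∏ i, ∏ j ∈ Iio i, qNumber q (betaNumber k μ i - betaNumber k μ j) =
        ∏ i, qFactorial q (betaNumber k μ i) := prod_hookLength_mul_prod_betaNumber_sub hk _
  have ne_zero : ∏ i, qFactorial q (betaNumber k μ i) ≠ 0 :=
    prod_ne_zero_iff.2 fun i _ ↦ qFactorial_ne_zero hq _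
  have qpow_ne_zero : ∏ j : Fin k, ∏ t ∈ range j, q ^ t ≠ 0 :=
    prod_ne_zero_iff.2 fun j _ ↦ prod_ne_zero_iff.2 fun t _ ↦ pow_ne_zero t hq0
  have vandermonde_eq := prod_pow_mul_prod_qFactorial_mul_det_jacobiTrudi hq (betaNumber k μ)
  rw [prod_qNumber_betaNumber_sub_qNumber hk, ← hooks_mul_diffs] at vandermonde_eq
  rw [← hooks_mul_diffs] at ne_zero
  rw [eq_div_iff (left_ne_zero_of_mul ne_zero)]
  refine mul_right_cancel₀ (right_ne_zero_of_mul ne_zero) ?_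
  rw [mul_assoc, mul_comm]
  exact mul_left_cancel₀ qpow_ne_zero vandermonde_eq

lemma det_jacobiTrudi_betaNumber_one [CharZero K] (hk : μ.colLen 0 ≤ k) :
    (jacobiTrudi (invQFactorial (1 : K)) fun i ↦ (betaNumber k μ i : ℤ)).det =
      (∏ c ∈ μ.cells, (hookLength μ c : K))⁻¹ := by
  have hq (m : ℕ) (hm : m ≠ 0) : qNumber (1 : K) m ≠ 0 := by simpa [qNumber_one] using hm
  simp [det_jacobiTrudi_betaNumber one_ne_zero hq hk, qNumber_one]

end PrincipalSpecialization

theorem sum_fmu_qhook_eq_qfact_general {K : Type*} [Field K] [CharZero K] {q : K} (hq0 : q ≠ 0)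
    (hq : ∀ m ≠ 0, qNumber q m ≠ 0) (n : ℕ) :
    ∑ᶠ μ : { μ : YoungDiagram // μ.card = n },
        (n.factorial : K) / (∏ c ∈ μ.1.cells, (hookLength μ.1 c : K)) * q ^ nStat μ.1 *
          qFactorial q n / ∏ c ∈ μ.1.cells, qNumber q (hookLength μ.1 c) =
      qFactorial q n := by
  let summand (μ : YoungDiagram) : K :=
    n.factorial / (∏ c ∈ μ.cells, (hookLength μ c : K)) * q ^ nStat μ * qFactorial q n /
      ∏ c ∈ μ.cells, qNumber q (hookLength μ c)
  let pairing (ℓ : Fin n → ℤ) : K :=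
    (jacobiTrudi (invQFactorial 1) ℓ).det * (jacobiTrudi (invQFactorial q) ℓ).det
  calc
    _ = ∑ᶠ ℓ ∈ (betaSeqs n n : Set (Fin n → ℤ)), n.factorial * pairing ℓ * qFactorial q n := by
      refine (finsum_set_coe_eq_finsum_mem (f := summand) {μ | μ.card = n}).trans
        (finsum_mem_eq_of_bijOn _ (bijOn_betaNumber le_rfl) fun μ hμ ↦ ?_)
      have hk : μ.colLen 0 ≤ n := hμ ▸ colLen_le_card μ 0
      simp only [summand, pairing, det_jacobiTrudi_betaNumber_one hk,
        det_jacobiTrudi_betaNumber hq0 hq hk]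
      ring
    _ = n.factorial * (∑ ℓ ∈ betaSeqs n n, pairing ℓ) * qFactorial q n := by
      rw [finsum_mem_coe_finset, Finset.mul_sum, Finset.sum_mul]
    _ = qFactorial q n := by
      rw [factorial_mul_sum_betaSeqs (invQFactorial_of_neg 1) intCast_mul_invQFactorial_one
        (invQFactorial_zero 1) (invQFactorial_of_neg q) (invQFactorial_zero q) le_rfl,
        invQFactorial_one, one_pow, one_mul]

/-- The graded-dimension identity for the coinvariant algebra:
`Σ_{μ ⊢ n} f_μ · q^{n(μ)} · [n]_q! / ∏_{(i,j)∈μ} [h_{ij}]_q = [n]_q!`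
as polynomials (rational functions) in `q`. -/
theorem sum_fmu_qhook_eq_qfact (n : ℕ) (hn : 0 < n) :
    ∑ᶠ μ : { μ : YoungDiagram // μ.card = n },
        fSYT n μ.1 * qq ^ nStat μ.1 * qFact n / ∏ c ∈ μ.1.cells, qInt (hookLength μ.1 c) =
      qFact n :=
  sum_fmu_qhook_eq_qfact_general RatFunc.X_ne_zero (fun _ ↦ qNumber_ratFuncX_ne_zero ℚ) n

end
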